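/- arXiv:2205.04091 — 2 statements merged into one kernel-verified Lean document; each statement's English description precedes it below -/
import Mathlib

section
/- Fix h > 0. For every complex number v and every real number x, the series Σ_{j=0}^∞ ψ_j(x)·v^j/√(j!) converges absolutely and its sum equals e^{x·v·√(2/h) − v²/2}; moreover, for each fixed v ∈ ℂ the series converges in L²(ℝ, μ_{ℝ,h/2}). -/
open Real MeasureTheory

/-- Hermite functions: `psi h j x = ((−1)^j/√(j!))·(h/2)^{j/2}·e^{x²/h}·(d/dx)^j(e^{−x²/h})(x)`. -/
noncomputable def psi (h : ℝ) (j : ℕ) (x : ℝ) : ℝ :=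
  ((-1 : ℝ) ^ j / Real.sqrt (Nat.factorial j)) * (h / 2) ^ ((j : ℝ) / 2) *
    Real.exp (x ^ 2 / h) * iteratedDeriv j (fun t => Real.exp (-t ^ 2 / h)) x

/-- The Gaussian measure `μ_{ℝ,s}` of variance `s` on `ℝ`. -/
noncomputable def gaussMeasure (s : ℝ) : Measure ℝ :=
  volume.withDensity fun x =>
    ENNReal.ofReal ((2 * π * s) ^ (-(1 : ℝ) / 2) * Real.exp (-x ^ 2 / (2 * s)))

/-!
After the rescaling `a = √(2/h) x`, the series is the exponential generating function
`∑ Heₙ(a) vⁿ / n! = exp (a v - v² / 2)` of the probabilists' Hermite polynomials, that is, the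
Taylor series in `v` of an entire function. Cauchy's estimates on a circle `|v| = R` bound its
`n`-th remainder by `exp (|a| R + R² / 2)` times a geometric sequence. Since `exp (R |a|)` is square
integrable against a Gaussian, the remainders tend to zero in mean square, geometrically fast.
-/

open Filter Topology
open Polynomial (aeval hermite)

theorem norm_taylor_remainder_le {E : Type*} [NormedAddCommGroup E] [NormedSpace ℂ E]
    [CompleteSpace E] {f : ℂ → E} {c z : ℂ} {R C : ℝ} (hf : DiffContOnCl ℂ f (Metric.ball c R))
    (hC : ∀ w ∈ Metric.sphere c R, ‖f w‖ ≤ C) (hz : z ∈ Metric.ball c R) (n : ℕ) :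
    ‖(∑ j ∈ Finset.range n, (j.factorial : ℂ)⁻¹ • (z - c) ^ j • iteratedDeriv j f c) - f z‖ ≤
      C * (‖z - c‖ / R) ^ n / (1 - ‖z - c‖ / R) := by
  have hR : 0 < R := Metric.pos_of_mem_ball hz
  refine norm_sub_le_of_geometric_bound_of_hasSum
    ((div_lt_one hR).2 (mem_ball_iff_norm.1 hz)) (fun j => ?_)
    (Complex.hasSum_taylorSeries_on_ball hf.differentiableOn hz) n
  calc ‖(j.factorial : ℂ)⁻¹ • (z - c) ^ j • iteratedDeriv j f c‖
      = (j.factorial : ℝ)⁻¹ * (‖z - c‖ ^ j * ‖iteratedDeriv j f c‖) := by simp [norm_smul]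
    _ ≤ (j.factorial : ℝ)⁻¹ * (‖z - c‖ ^ j * (j.factorial * C / R ^ j)) := by
        gcongr
        exact Complex.norm_iteratedDeriv_le_of_forall_mem_sphere_norm_le j hR hf hC
    _ = C * (‖z - c‖ / R) ^ j := by
        rw [div_pow]
        field_simp

/-- The exponential generating function `v ↦ exp (a v - v² / 2)` of the values at `a` of the
probabilists' Hermite polynomials. -/
noncomputable def hermiteGenFun (a v : ℂ) : ℂ :=
  Complex.exp (a * v - v ^ 2 / 2)

theorem hasDerivAt_hermiteGenFun (a v : ℂ) :
    HasDerivAt (hermiteGenFun a) ((a - v) * hermiteGenFun a v) v := by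
  have hexponent : HasDerivAt (fun w : ℂ => a * w - w ^ 2 / 2) (a - v) v := by
    simpa using ((hasDerivAt_id v).const_mul a).fun_sub (((hasDerivAt_id v).pow 2).div_const 2)
  exact hexponent.cexp.congr_deriv (mul_comm _ _)

theorem differentiable_hermiteGenFun (a : ℂ) : Differentiable ℂ (hermiteGenFun a) :=
  fun v => (hasDerivAt_hermiteGenFun a v).differentiableAt

theorem iteratedDeriv_hermiteGenFun (n : ℕ) (a v : ℂ) :
    iteratedDeriv n (hermiteGenFun a) v = aeval (a - v) (hermite n) * hermiteGenFun a v := by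
  induction n generalizing v with
  | zero => simp
  | succ n ih =>
    have hpoly : HasDerivAt (fun w => aeval (a - w) (hermite n))
        (-aeval (a - v) (hermite n).derivative) v := by
      simpa using ((hermite n).hasDerivAt_aeval (a - v)).comp_const_sub a v
    rw [iteratedDeriv_succ, funext ih, (hpoly.fun_mul (hasDerivAt_hermiteGenFun a v)).deriv,
      Polynomial.hermite_succ]
    simp only [map_sub, map_mul, Polynomial.aeval_X]
    ring

theorem taylor_term_hermiteGenFun (n : ℕ) (a v : ℂ) :
    (n.factorial : ℂ)⁻¹ • v ^ n • iteratedDeriv n (hermiteGenFun a) 0 =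
      aeval a (hermite n) * v ^ n / n.factorial := by
  have hzero : hermiteGenFun a 0 = 1 := by simp [hermiteGenFun]
  simp only [iteratedDeriv_hermiteGenFun, hzero, sub_zero, mul_one, smul_eq_mul]
  ring

theorem hasSum_hermiteGenFun (a v : ℂ) :
    HasSum (fun n : ℕ => aeval a (hermite n) * v ^ n / n.factorial) (hermiteGenFun a v) := by
  simpa only [sub_zero, taylor_term_hermiteGenFun] using
    Complex.hasSum_taylorSeries_of_entire (differentiable_hermiteGenFun a) 0 v

theorem norm_hermiteGenFun_le (a v : ℂ) :
    ‖hermiteGenFun a v‖ ≤ rexp (‖a‖ * ‖v‖ + ‖v‖ ^ 2 / 2) := by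
  refine (Complex.norm_exp_le_exp_norm _).trans (Real.exp_le_exp.2 ?_)
  calc ‖a * v - v ^ 2 / 2‖
      ≤ ‖a * v‖ + ‖v ^ 2 / 2‖ := norm_sub_le _ _
    _ = ‖a‖ * ‖v‖ + ‖v‖ ^ 2 / 2 := by simp

theorem norm_sum_hermite_sub_hermiteGenFun_le (a : ℂ) {v : ℂ} {R : ℝ} (hv : ‖v‖ < R) (n : ℕ) :
    ‖(∑ j ∈ Finset.range n, aeval a (hermite j) * v ^ j / j.factorial) - hermiteGenFun a v‖ ≤
      rexp (‖a‖ * R + R ^ 2 / 2) * (‖v‖ / R) ^ n / (1 - ‖v‖ / R) := by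
  have hsphere : ∀ w ∈ Metric.sphere (0 : ℂ) R,
      ‖hermiteGenFun a w‖ ≤ rexp (‖a‖ * R + R ^ 2 / 2) := by
    intro w hw
    simpa only [mem_sphere_zero_iff_norm.1 hw] using norm_hermiteGenFun_le a w
  simpa only [sub_zero, taylor_term_hermiteGenFun] using
    norm_taylor_remainder_le (differentiable_hermiteGenFun a).diffContOnCl hsphere
      (mem_ball_zero_iff.2 hv) n

theorem tendsto_integral_norm_sum_hermite_sub_hermiteGenFun_pow {Ω : Type*} [MeasurableSpace Ω]
    {μ : Measure Ω} {X : Ω → ℂ} (hX : ∀ t : ℝ, Integrable (fun ω => rexp (t * ‖X ω‖)) μ)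
    (v : ℂ) {p : ℕ} (hp : p ≠ 0) :
    Tendsto (fun n : ℕ => ∫ ω, ‖(∑ j ∈ Finset.range n,
      aeval (X ω) (hermite j) * v ^ j / j.factorial) - hermiteGenFun (X ω) v‖ ^ p ∂μ)
      atTop (𝓝 0) := by
  set R : ℝ := ‖v‖ + 1
  have hvR : ‖v‖ < R := lt_add_one _
  set r : ℝ := ‖v‖ / R
  have hr : r < 1 := (div_lt_one (by positivity)).2 hvR
  have hmajorant : Integrable (fun ω => rexp (‖X ω‖ * R + R ^ 2 / 2) ^ p) μ := by
    refine ((hX (p * R)).mul_const (rexp (p * (R ^ 2 / 2)))).congr (.of_forall fun ω => ?_)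
    simp only [← Real.exp_nat_mul, ← Real.exp_add]
    ring_nf
  have hgeometric : Tendsto (fun n : ℕ => (r ^ n / (1 - r)) ^ p) atTop (𝓝 0) := by
    simpa [hp] using
      ((tendsto_pow_atTop_nhds_zero_of_lt_one (by positivity) hr).div_const (1 - r)).pow p
  refine squeeze_zero (fun n => integral_nonneg fun ω => by positivity) (fun n => ?_)
    (by simpa only [mul_zero] using
      hgeometric.const_mul (∫ ω, rexp (‖X ω‖ * R + R ^ 2 / 2) ^ p ∂μ))
  rw [← integral_mul_const]
  refine integral_mono_of_nonneg (.of_forall fun ω => by positivity) (hmajorant.mul_const _)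
    (.of_forall fun ω => ?_)
  simp only [← mul_pow, ← mul_div_assoc]
  gcongr
  exact norm_sum_hermite_sub_hermiteGenFun_le (X ω) hvR n

theorem iteratedDeriv_exp_neg_sq_div {h : ℝ} (hh : 0 ≤ h) (n : ℕ) (x : ℝ) :
    iteratedDeriv n (fun t => rexp (-t ^ 2 / h)) x =
      (-1) ^ n * √(2 / h) ^ n * aeval (√(2 / h) * x) (hermite n) * rexp (-x ^ 2 / h) := by
  have hscale (t : ℝ) : -t ^ 2 / h = -((√(2 / h) * t) ^ 2 / 2) := by
    rw [mul_pow, Real.sq_sqrt (by positivity)]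
    ring
  have hcontDiff : ContDiff ℝ n (fun y : ℝ => rexp (-(y ^ 2 / 2))) := by fun_prop
  simp only [hscale]
  simp only [iteratedDeriv_comp_const_mul hcontDiff, iteratedDeriv_eq_iterate,
    Polynomial.deriv_gaussian_eq_hermite_mul_gaussian]
  ring

theorem psi_eq_hermite {h : ℝ} (hh : 0 < h) (n : ℕ) (x : ℝ) :
    psi h n x = aeval (√(2 / h) * x) (hermite n) / √n.factorial := by
  have hpow : (h / 2) ^ ((n : ℝ) / 2) * √(2 / h) ^ n = 1 := by
    rw [Real.rpow_div_two_eq_sqrt _ (by positivity), Real.rpow_natCast, ← mul_pow,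
      ← Real.sqrt_mul (by positivity), div_mul_div_cancel₀ two_ne_zero, div_self hh.ne',
      Real.sqrt_one, one_pow]
  have hexp : rexp (x ^ 2 / h) * rexp (-x ^ 2 / h) = 1 := by
    rw [← Real.exp_add, neg_div, add_neg_cancel, Real.exp_zero]
  have hsign : (-1 : ℝ) ^ n * (-1) ^ n = 1 := by simp [← mul_pow]
  rw [psi, iteratedDeriv_exp_neg_sq_div hh.le]
  calc _ = ((-1 : ℝ) ^ n * (-1) ^ n) * ((h / 2) ^ ((n : ℝ) / 2) * √(2 / h) ^ n) *
        (rexp (x ^ 2 / h) * rexp (-x ^ 2 / h)) *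
        (aeval (√(2 / h) * x) (hermite n) / √n.factorial) := by ring
    _ = _ := by rw [hsign, hpow, hexp]; ring

theorem psi_mul_pow_div_sqrt_factorial {h : ℝ} (hh : 0 < h) (v : ℂ) (n : ℕ) (x : ℝ) :
    (psi h n x : ℂ) * v ^ n / (√n.factorial : ℂ) =
      aeval (√(2 / h) * x : ℂ) (hermite n) * v ^ n / n.factorial := by
  have hcast : ((aeval (√(2 / h) * x) (hermite n) : ℝ) : ℂ) =
      aeval (√(2 / h) * x : ℂ) (hermite n) := by
    simpa using (Polynomial.aeval_algebraMap_apply ℂ (√(2 / h) * x) (hermite n)).symm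
  have hsqrt : (√n.factorial : ℂ) * (√n.factorial : ℂ) = n.factorial := by
    exact_mod_cast Real.mul_self_sqrt (Nat.cast_nonneg (α := ℝ) n.factorial)
  rw [psi_eq_hermite hh, Complex.ofReal_div, hcast, ← hsqrt]
  ring

theorem gaussMeasure_eq_gaussianReal {s : ℝ} (hs : 0 < s) :
    gaussMeasure s = ProbabilityTheory.gaussianReal 0 s.toNNReal := by
  rw [ProbabilityTheory.gaussianReal_of_var_ne_zero _ (Real.toNNReal_pos.2 hs).ne', gaussMeasure]
  congr 1 with x
  rw [ProbabilityTheory.gaussianPDF, ProbabilityTheory.gaussianPDFReal,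
    Real.coe_toNNReal _ hs.le, sub_zero, neg_div, Real.rpow_neg (by positivity),
    ← Real.sqrt_eq_rpow]

theorem integrable_exp_mul_abs_gaussMeasure {s : ℝ} (hs : 0 < s) (t : ℝ) :
    Integrable (fun x => rexp (t * |x|)) (gaussMeasure s) := by
  rw [gaussMeasure_eq_gaussianReal hs]
  exact ProbabilityTheory.integrable_exp_mul_abs
    (ProbabilityTheory.integrable_exp_mul_gaussianReal t)
    (ProbabilityTheory.integrable_exp_mul_gaussianReal (-t))

/-- The Bargman kernel series `Σ_j ψ_j(x) v^j/√(j!)` converges absolutely to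
`e^{x·v·√(2/h) − v²/2}`, and, for fixed `v`, in `L²(ℝ, μ_{ℝ,h/2})`. -/
theorem bargman_kernel_series (h : ℝ) (hh : 0 < h) :
    (∀ (v : ℂ) (x : ℝ),
      Summable (fun j : ℕ =>
        ‖(psi h j x : ℂ) * v ^ j / (Real.sqrt (Nat.factorial j) : ℂ)‖) ∧
      ∑' j : ℕ, (psi h j x : ℂ) * v ^ j / (Real.sqrt (Nat.factorial j) : ℂ) =
        Complex.exp ((x : ℂ) * v * (Real.sqrt (2 / h) : ℂ) - v ^ 2 / 2)) ∧
    (∀ v : ℂ, Filter.Tendsto (fun n : ℕ =>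
        ∫ x : ℝ, ‖(∑ j ∈ Finset.range n,
            (psi h j x : ℂ) * v ^ j / (Real.sqrt (Nat.factorial j) : ℂ)) -
          Complex.exp ((x : ℂ) * v * (Real.sqrt (2 / h) : ℂ) - v ^ 2 / 2)‖ ^ 2
          ∂ gaussMeasure (h / 2))
      Filter.atTop (nhds 0)) := by
  have hkernel (v : ℂ) (x : ℝ) :
      Complex.exp ((x : ℂ) * v * (√(2 / h) : ℂ) - v ^ 2 / 2) =
        hermiteGenFun (√(2 / h) * x) v := by
    rw [hermiteGenFun]
    ring_nf
  simp only [psi_mul_pow_div_sqrt_factorial hh, hkernel]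
  refine ⟨fun v x => ?_, fun v => ?_⟩
  · have hsum := hasSum_hermiteGenFun (√(2 / h) * x) v
    exact ⟨hsum.summable.norm, hsum.tsum_eq⟩
  · refine tendsto_integral_norm_sum_hermite_sub_hermiteGenFun_pow (fun t => ?_) v two_ne_zero
    simpa [mul_assoc, abs_of_nonneg (Real.sqrt_nonneg _)] using
      integrable_exp_mul_abs_gaussMeasure (half_pos hh) (t * √(2 / h))
end

section
/- Fix h > 0. For all complex numbers u, v and all real numbers x, ξ: W_{h,ℝ}(K_u, K_{conj(v)})(x,ξ) = exp(−uv + √(2/h)·x·(u+v) + i·√(2/h)·ξ·(v−u)), where K_w(x) = e^{x·w·√(2/h) − w²/2} denotes the Bargman kernel with parameter w ∈ ℂ. -/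
open Real MeasureTheory

/-- The one-dimensional Gaussian Wigner function `W_{h,ℝ}(f,g)`. -/
noncomputable def wigner1 (h : ℝ) (f g : ℝ → ℂ) (z ζ : ℝ) : ℂ :=
  (Real.exp (ζ ^ 2 / h) : ℂ) *
    ∫ t : ℝ, Complex.exp (-2 * Complex.I * (ζ : ℂ) * (t : ℂ) / (h : ℂ)) * f (z + t) *
      (starRingEnd ℂ) (g (z - t)) * (Real.exp (-t ^ 2 / h) : ℂ) *
        (((π * h) ^ (-(1 : ℝ) / 2) : ℝ) : ℂ)

/-- The Bargman kernel `K_w(x) = e^{x·w·√(2/h) − w²/2}`. -/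
noncomputable def bargman (h : ℝ) (w : ℂ) (x : ℝ) : ℂ :=
  Complex.exp ((x : ℂ) * w * (Real.sqrt (2 / h) : ℂ) - w ^ 2 / 2)

/-! The weight `e^{-t²/h} (πh)^{-1/2}` in the Wigner function is the density of the centred Gaussian
measure of variance `h/2`. In the product `K_u(x + t) K_v(x - t)` the exponents are linear in `±t`,
so `t` survives only through a factor `e^{√(2/h)(u - v)t}`, and the Wigner function is a Gaussian
exponential moment `∫ e^{ct} = e^{hc²/4}` with `c = √(2/h)(u - v) - 2iξ/h`. Expanding `c²`, the
`ξ²` term cancels the prefactor `e^{ξ²/h}` and `(u - v)²/2` turns `-(u² + v²)/2` into `-uv`. -/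

open ProbabilityTheory ComplexConjugate

theorem gaussianPDFReal_zero_toNNReal_half {h : ℝ} (hh : 0 < h) (t : ℝ) :
    gaussianPDFReal 0 (h / 2).toNNReal t = Real.exp (-t ^ 2 / h) * (π * h) ^ (-(1 : ℝ) / 2) := by
  have two_pi_mul_variance : 2 * π * (h / 2) = π * h := by ring
  have two_mul_variance : 2 * (h / 2) = h := by ring
  rw [gaussianPDFReal, Real.coe_toNNReal _ (half_pos hh).le, two_pi_mul_variance,
    two_mul_variance, sub_zero, mul_comm, Real.sqrt_eq_rpow, neg_div 2 (1 : ℝ),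
    Real.rpow_neg (by positivity)]

theorem wigner1_eq_integral_gaussianReal {h : ℝ} (hh : 0 < h) (f g : ℝ → ℂ) (z ζ : ℝ) :
    wigner1 h f g z ζ = (Real.exp (ζ ^ 2 / h) : ℂ) *
      ∫ t : ℝ, Complex.exp (-2 * Complex.I * ζ * t / h) * f (z + t) * conj (g (z - t))
        ∂gaussianReal 0 (h / 2).toNNReal := by
  have variance_ne_zero : (h / 2).toNNReal ≠ 0 := (Real.toNNReal_pos.2 (half_pos hh)).ne'
  rw [wigner1, integral_gaussianReal_eq_integral_smul variance_ne_zero]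
  congr 2 with t
  rw [gaussianPDFReal_zero_toNNReal_half hh, Complex.real_smul, Complex.ofReal_mul]
  ring

theorem conj_bargman (h : ℝ) (w : ℂ) (x : ℝ) : conj (bargman h w x) = bargman h (conj w) x := by
  simp only [bargman, ← Complex.exp_conj, map_sub, map_mul, map_div₀, map_pow,
    Complex.conj_ofReal, map_ofNat]

theorem bargman_add_mul_bargman_sub (h : ℝ) (u v : ℂ) (x t : ℝ) :
    bargman h u (x + t) * bargman h v (x - t) =
      bargman h u x * bargman h v x * Complex.exp ((√(2 / h) : ℂ) * (u - v) * t) := by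
  simp only [bargman, ← Complex.exp_add]
  congr 1
  push_cast
  ring

theorem wigner1_bargman_eq_mul_complexMGF {h : ℝ} (hh : 0 < h) (u v : ℂ) (x ξ : ℝ) :
    wigner1 h (bargman h u) (bargman h (conj v)) x ξ =
      Real.exp (ξ ^ 2 / h) * (bargman h u x * bargman h v x *
        complexMGF id (gaussianReal 0 (h / 2).toNNReal)
          (√(2 / h) * (u - v) - 2 * Complex.I * ξ / h)) := by
  have integrand_eq (t : ℝ) :
      Complex.exp (-2 * Complex.I * ξ * t / h) * bargman h u (x + t) *
          conj (bargman h (conj v) (x - t)) =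
        bargman h u x * bargman h v x *
          Complex.exp ((√(2 / h) * (u - v) - 2 * Complex.I * ξ / h) * t) := by
    rw [conj_bargman, Complex.conj_conj, mul_assoc, bargman_add_mul_bargman_sub, mul_left_comm,
      ← Complex.exp_add]
    ring_nf
  simp only [wigner1_eq_integral_gaussianReal hh, integrand_eq, integral_const_mul, complexMGF, id]

theorem wigner_bargman_exponent_eq {K : Type*} [Field K] [CharZero K] {h s i : K} (hh : h ≠ 0)
    (hs : s ^ 2 = 2 / h) (hi : i ^ 2 = -1) (u v x ξ : K) :
    ξ ^ 2 / h + (x * u * s - u ^ 2 / 2 + (x * v * s - v ^ 2 / 2) +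
        h / 2 * (s * (u - v) - 2 * i * ξ / h) ^ 2 / 2) =
      -(u * v) + s * x * (u + v) + i * s * ξ * (v - u) := by
  have expand_square : h / 2 * (s * (u - v) - 2 * i * ξ / h) ^ 2 / 2 =
      (u - v) ^ 2 / 2 + i * s * ξ * (v - u) - ξ ^ 2 / h := by
    calc
      _ = h * s ^ 2 * (u - v) ^ 2 / 4 + i * s * ξ * (v - u) + i ^ 2 * ξ ^ 2 / h := by
        field_simp
        ring
      _ = _ := by
        rw [hs, hi]
        field_simp
        ring
  rw [expand_square]
  ring

/-- The Wigner function of two Bargman kernels. -/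
theorem wigner_bargman (h : ℝ) (hh : 0 < h) (u v : ℂ) (x ξ : ℝ) :
    wigner1 h (bargman h u) (bargman h ((starRingEnd ℂ) v)) x ξ =
      Complex.exp (-(u * v) + (Real.sqrt (2 / h) : ℂ) * (x : ℂ) * (u + v) +
        Complex.I * (Real.sqrt (2 / h) : ℂ) * (ξ : ℂ) * (v - u)) := by
  have variance_coe : (((h / 2).toNNReal : ℝ) : ℂ) = h / 2 := by
    rw [Real.coe_toNNReal _ (half_pos hh).le]
    push_cast
    rfl
  have sqrt_sq : (√(2 / h) : ℂ) ^ 2 = 2 / h := by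
    exact_mod_cast Real.sq_sqrt (by positivity : 0 ≤ 2 / h)
  rw [wigner1_bargman_eq_mul_complexMGF hh, complexMGF_id_gaussianReal, variance_coe,
    Complex.ofReal_zero, mul_zero, zero_add]
  simp only [bargman, Complex.ofReal_exp, ← Complex.exp_add]
  congr 1
  push_cast
  exact wigner_bargman_exponent_eq (Complex.ofReal_ne_zero.2 hh.ne') sqrt_sq Complex.I_sq u v x ξ
end
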